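/- Let λ, σ, τ > 0 be real, p, q complex with Re(p) > 0, Re(q) > 0, and η₁, η₂ complex with Re(η₁) > 0, Re(η₂) > 0. Then B_{p,q}^{λ;σ,τ}(η₁, η₂) = Σ_{n=0}^∞ B_{p,q}^{λ;σ,τ}(η₁+n, η₂+1), i.e. the series on the right converges and its sum equals the extended beta function on the left. -/

import Mathlib

open MeasureTheory Set Complex

/-- The classical Mittag-Leffler function `E_λ(x) = Σ xⁿ / Γ(λn+1)`. -/
noncomputable def mlE (lam : ℝ) (x : ℂ) : ℂ :=
  ∑' n : ℕ, x ^ n / Complex.Gamma (lam * n + 1)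

/-- The extended beta function
`B_{p,q}^{λ;σ,τ}(η₁,η₂) = ∫₀¹ t^{η₁-1}(1-t)^{η₂-1} E_λ(-p/t^σ) E_λ(-q/(1-t)^τ) dt`. -/
noncomputable def extBeta (lam sig tau : ℝ) (p q e1 e2 : ℂ) : ℂ :=
  ∫ t in Ioo (0:ℝ) 1,
    (t : ℂ) ^ (e1 - 1) * (1 - (t : ℂ)) ^ (e2 - 1) *
      mlE lam (-p / (t : ℂ) ^ (sig : ℂ)) * mlE lam (-q / (1 - (t : ℂ)) ^ (tau : ℂ))

/-!
The identity is `∑ tⁿ (1 - t) = 1` on `(0, 1)`, integrated term by term against the integrand of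
`extBeta`. Dominated convergence allows this when that integrand is integrable, but for large `λ`
it need not be, and then the Bochner integral takes the value `0`. What saves the identity is that
integrability does not depend on `η₁` and `η₂`, so that either every integral converges, or every
one of them is `0`.

For this independence put `c = -p`, `y = t ^ (-σ / λ)` and `u y = E_λ (c y ^ λ)`. Convergence near
`t = 0` at a single pair `(η₁, η₂)` makes the Laplace transform `L` of `u` converge on the right
half plane; analytic continuation of `(s ^ λ - c) L s = s ^ (λ - 1)` from large real `s` then shows
that `s ^ λ ≠ c` there. If `λ < 2`, inverting the transform on the line `Re s = 1 / y` bounds `u y`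
by a multiple of `y ^ k` for every `0 < k ≤ 1`; if `λ ≥ 2`, the only possibility besides `c = 0` is
`λ = 2` and `c < 0`, where `u` is a cosine. In all cases `E_λ (-p / t ^ σ)` is `O(t ^ (-r))` for
every `r > 0`, which is integrable against every beta weight. The end `t = 1` is symmetric.
-/

open Filter Topology Asymptotics FourierTransform

section MittagLeffler

variable {lam : ℝ}

theorem rpow_mul_exp_neg_le_Gamma_add_one {x T : ℝ} (hx : 0 ≤ x) (hT : 0 < T) :
    T ^ x * Real.exp (-T) ≤ Real.Gamma (x + 1) := by
  have hint : IntegrableOn (fun t : ℝ => Real.exp (-t) * t ^ x) (Ioi 0) := by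
    simpa using Real.GammaIntegral_convergent (s := x + 1) (by linarith)
  calc T ^ x * Real.exp (-T) = ∫ t in Ioi T, Real.exp (-t) * T ^ x := by
        rw [integral_mul_const, integral_exp_neg_Ioi, mul_comm]
    _ ≤ ∫ t in Ioi T, Real.exp (-t) * t ^ x := by
        refine setIntegral_mono_on ((integrableOn_exp_neg_Ioi T).mul_const _)
          (hint.mono_set (Ioi_subset_Ioi hT.le)) measurableSet_Ioi fun t ht => ?_
        have : T ≤ t := le_of_lt ht
        gcongr
    _ ≤ ∫ t in Ioi 0, Real.exp (-t) * t ^ x := by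
        refine setIntegral_mono_set hint ?_ (Ioi_subset_Ioi hT.le).eventuallyLE
        filter_upwards [ae_restrict_mem measurableSet_Ioi] with t (ht : 0 < t)
        exact mul_nonneg (Real.exp_pos _).le (Real.rpow_nonneg ht.le _)
    _ = Real.Gamma (x + 1) := by
        rw [Real.Gamma_eq_integral (by linarith), add_sub_cancel_right]

theorem exists_pos_lt_rpow (hlam : 0 < lam) (R : ℝ) : ∃ b : ℝ, 0 < b ∧ R < b ^ lam :=
  ((eventually_gt_atTop 0).and ((tendsto_rpow_atTop hlam).eventually_gt_atTop R)).exists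

theorem norm_mlE_term_le (hlam : 0 ≤ lam) {b : ℝ} (hb : 0 < b) (x : ℂ) (n : ℕ) :
    ‖x ^ n / Complex.Gamma (lam * n + 1)‖ ≤ Real.exp b * (‖x‖ / b ^ lam) ^ n := by
  have hΓ : Complex.Gamma (lam * n + 1) = (Real.Gamma (lam * n + 1) : ℂ) := by
    rw [← Complex.Gamma_ofReal]; push_cast; rfl
  have hpos : 0 < b ^ (lam * n) * Real.exp (-b) := by positivity
  have hle := rpow_mul_exp_neg_le_Gamma_add_one (x := lam * n) (by positivity) hb
  rw [hΓ, norm_div, norm_pow, Complex.norm_of_nonneg (hpos.le.trans hle)]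
  calc ‖x‖ ^ n / Real.Gamma (lam * n + 1) ≤ ‖x‖ ^ n / (b ^ (lam * n) * Real.exp (-b)) := by
        gcongr
    _ = Real.exp b * (‖x‖ / b ^ lam) ^ n := by
        rw [Real.rpow_mul hb.le, Real.rpow_natCast, Real.exp_neg, div_pow]
        field_simp

theorem hasSum_mlE (hlam : 0 < lam) (x : ℂ) :
    HasSum (fun n : ℕ => x ^ n / Complex.Gamma (lam * n + 1)) (mlE lam x) := by
  obtain ⟨b, hb, hxb⟩ := exists_pos_lt_rpow hlam ‖x‖
  have hgeom : Summable fun n : ℕ => Real.exp b * (‖x‖ / b ^ lam) ^ n :=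
    (summable_geometric_of_lt_one (by positivity) ((div_lt_one (by positivity)).2 hxb)).mul_left _
  exact (hgeom.of_norm_bounded (norm_mlE_term_le hlam.le hb x)).hasSum

theorem differentiable_mlE (hlam : 0 < lam) : Differentiable ℂ (mlE lam) := by
  intro z
  obtain ⟨b, hb, hzb⟩ := exists_pos_lt_rpow hlam (‖z‖ + 1)
  have hgeom : Summable fun n : ℕ => Real.exp b * ((‖z‖ + 1) / b ^ lam) ^ n :=
    (summable_geometric_of_lt_one (by positivity) ((div_lt_one (by positivity)).2 hzb)).mul_left _
  have hball : DifferentiableOn ℂ (mlE lam) (Metric.ball 0 (‖z‖ + 1)) := by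
    refine Complex.differentiableOn_tsum_of_summable_norm hgeom
      (fun n => ((differentiable_id.pow n).div_const _).differentiableOn) Metric.isOpen_ball
      fun n w hw => (norm_mlE_term_le hlam.le hb w n).trans ?_
    have : ‖w‖ ≤ ‖z‖ + 1 := (mem_ball_zero_iff.1 hw).le
    gcongr
  exact hball.differentiableAt (Metric.isOpen_ball.mem_nhds (by simp))

@[simp]
theorem mlE_zero (lam : ℝ) : mlE lam 0 = 1 := by
  rw [mlE, tsum_eq_single 0 fun n hn => by simp [hn]]
  simp

theorem mlE_two_neg_sq (x : ℂ) : mlE 2 (-x ^ 2) = Complex.cos x := by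
  refine (hasSum_mlE two_pos (-x ^ 2)).unique ?_
  convert Complex.hasSum_cos x using 2 with n
  have hΓ : Complex.Gamma ((2 : ℝ) * n + 1) = (2 * n).factorial := by
    rw [← Complex.Gamma_nat_eq_factorial]
    push_cast
    rfl
  rw [hΓ, neg_pow, ← pow_mul]

end MittagLeffler

section Laplace

variable {E : Type*} [NormedAddCommGroup E] [NormedSpace ℂ E] {f : ℝ → E} {s z : ℂ}

/-- Absolute convergence of the Laplace integral of `f` at the complex point `s`. -/
def LaplaceIntegrable (f : ℝ → E) (s : ℂ) : Prop :=
  IntegrableOn (fun y : ℝ => cexp (-(s * y)) • f y) (Ioi 0)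

/-- The Laplace transform `∫₀^∞ e^{-sy} f(y) dy`, with Mathlib's value `0` where the integral
does not converge absolutely. -/
noncomputable def laplace (f : ℝ → E) (s : ℂ) : E :=
  ∫ y in Ioi (0 : ℝ), cexp (-(s * y)) • f y

theorem LaplaceIntegrable.mono (hf : LaplaceIntegrable f s) (hsz : s.re ≤ z.re) :
    LaplaceIntegrable f z := by
  have hbdd : ∀ᵐ y : ℝ ∂volume.restrict (Ioi 0), ‖cexp (-((z - s) * y))‖ ≤ 1 := by
    filter_upwards [ae_restrict_mem measurableSet_Ioi] with y (hy : 0 < y)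
    rw [Complex.norm_exp, Real.exp_le_one_iff, ← neg_mul, re_mul_ofReal, neg_re, sub_re]
    nlinarith
  refine (Integrable.bdd_smul hf 1 (by fun_prop) hbdd).congr (.of_forall fun y => ?_)
  simp only [Pi.smul_apply', smul_smul, ← Complex.exp_add]
  ring_nf

theorem LaplaceIntegrable.sub {g : ℝ → E} (hf : LaplaceIntegrable f s)
    (hg : LaplaceIntegrable g s) : LaplaceIntegrable (fun y => f y - g y) s := by
  simp only [LaplaceIntegrable, smul_sub]
  exact Integrable.sub hf hg

theorem laplace_sub {g : ℝ → E} (hf : LaplaceIntegrable f s) (hg : LaplaceIntegrable g s) :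
    laplace (fun y => f y - g y) s = laplace f s - laplace g s := by
  simpa only [laplace, smul_sub] using integral_sub hf hg

theorem laplaceIntegrable_const (hs : 0 < s.re) (e : E) : LaplaceIntegrable (fun _ => e) s := by
  simpa only [LaplaceIntegrable, IntegrableOn, neg_mul] using
    Integrable.smul_const (integrableOn_exp_mul_complex_Ioi (a := -s) (by simpa) 0) e

theorem LaplaceIntegrable.aestronglyMeasurable (hf : LaplaceIntegrable f s) :
    AEStronglyMeasurable f (volume.restrict (Ioi 0)) := by
  have hexp : Continuous fun y : ℝ => cexp (s * y) := by fun_prop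
  refine (hexp.aestronglyMeasurable.smul hf.1).congr (.of_forall fun y => ?_)
  simp [smul_smul, ← Complex.exp_add]

theorem norm_mul_cexp_neg_mul_le {d y : ℝ} (hd : 0 < d) (hy : 0 ≤ y) (hsz : s.re + d ≤ z.re) :
    ‖-(y : ℂ) * cexp (-(z * y))‖ ≤ d⁻¹ * ‖cexp (-(s * y))‖ := by
  have hy_le : y ≤ d⁻¹ * Real.exp (d * y) := by
    rw [le_inv_mul_iff₀ hd]
    linarith [Real.add_one_le_exp (d * y)]
  rw [norm_mul, norm_neg, Complex.norm_of_nonneg hy, Complex.norm_exp, Complex.norm_exp,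
    ← neg_mul, ← neg_mul, re_mul_ofReal, re_mul_ofReal, neg_re, neg_re]
  calc y * Real.exp (-z.re * y) ≤ d⁻¹ * Real.exp (d * y) * Real.exp (-(s.re + d) * y) := by
        gcongr
    _ = d⁻¹ * Real.exp (-s.re * y) := by
        rw [mul_assoc, ← Real.exp_add]
        ring_nf

theorem differentiableAt_laplace (hf : LaplaceIntegrable f s) (hsz : s.re < z.re) :
    DifferentiableAt ℂ (laplace f) z := by
  obtain ⟨d, hd, hdz⟩ : ∃ d : ℝ, 0 < d ∧ s.re + d + d ≤ z.re :=
    ⟨(z.re - s.re) / 2, by linarith, by linarith⟩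
  have hmeas := hf.aestronglyMeasurable
  have hF_meas : ∀ w : ℂ, AEStronglyMeasurable (fun y : ℝ => cexp (-(w * y)) • f y)
      (volume.restrict (Ioi 0)) := fun w =>
    (Continuous.aestronglyMeasurable (by fun_prop)).smul hmeas
  have hF'_meas : AEStronglyMeasurable (fun y : ℝ => (-(y : ℂ) * cexp (-(z * y))) • f y)
      (volume.restrict (Ioi 0)) :=
    (Continuous.aestronglyMeasurable (by fun_prop)).smul hmeas
  have hbound : ∀ᵐ y : ℝ ∂volume.restrict (Ioi 0), ∀ w ∈ Metric.ball z d,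
      ‖(-(y : ℂ) * cexp (-(w * y))) • f y‖ ≤ d⁻¹ * ‖cexp (-(s * y)) • f y‖ := by
    filter_upwards [ae_restrict_mem measurableSet_Ioi] with y (hy : 0 < y) w hw
    have hre : s.re + d ≤ w.re := by
      have := (abs_re_le_norm (w - z)).trans_lt (mem_ball_iff_norm.1 hw)
      rw [sub_re] at this
      linarith [neg_abs_le (w.re - z.re)]
    rw [norm_smul, norm_smul, ← mul_assoc]
    gcongr ?_ * _
    exact norm_mul_cexp_neg_mul_le hd hy.le hre
  have hderiv : ∀ y : ℝ, ∀ w : ℂ,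
      HasDerivAt (fun w : ℂ => cexp (-(w * y)) • f y) ((-(y : ℂ) * cexp (-(w * y))) • f y) w := by
    intro y w
    have := ((hasDerivAt_mul_const (x := w) (y : ℂ)).fun_neg.cexp).smul_const (f y)
    rwa [mul_comm (cexp _)] at this
  exact (hasDerivAt_integral_of_dominated_loc_of_deriv_le (Metric.ball_mem_nhds z hd)
    (.of_forall hF_meas) (hf.mono (by linarith)) hF'_meas hbound (hf.norm.const_mul _)
    (.of_forall fun y w _ => hderiv y w)).2.differentiableAt

theorem fourier_indicator_exp_smul (f : ℝ → E) (a w : ℝ) :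
    𝓕 ((Ioi 0).indicator fun y : ℝ => cexp (-(a * y)) • f y) w =
      laplace f (a + (2 * Real.pi * w : ℝ) * I) := by
  rw [Real.fourier_eq', laplace, ← integral_indicator measurableSet_Ioi]
  congr 1 with y
  by_cases hy : y ∈ Ioi 0
  · simp only [indicator_of_mem hy, smul_smul, ← Complex.exp_add]
    congr 2
    simp
    ring
  · simp only [indicator_of_notMem hy, smul_zero]

variable [CompleteSpace E]

theorem laplace_const (hs : 0 < s.re) (e : E) : laplace (fun _ => e) s = s⁻¹ • e := by
  simp_rw [laplace, integral_smul_const, ← neg_mul]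
  rw [integral_exp_mul_complex_Ioi (by simpa)]
  simp [neg_div_neg_eq]

theorem norm_le_integral_norm_fourier {v : ℝ → E} (hv : Continuous v) (hv_int : Integrable v)
    (hFv_int : Integrable (𝓕 v)) (y : ℝ) : ‖v y‖ ≤ ∫ w, ‖𝓕 v w‖ := by
  calc ‖v y‖ = ‖𝓕⁻ (𝓕 v) y‖ := by rw [hv.fourierInv_fourier_eq hv_int hFv_int]
    _ ≤ ∫ w, ‖𝓕 v w‖ := by
      rw [Real.fourierInv_eq]
      exact (norm_integral_le_integral_norm _).trans_eq (by simp)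

theorem norm_le_exp_mul_integral_norm_laplace {a : ℝ} (hf : Continuous f) (hf0 : f 0 = 0)
    (hfa : LaplaceIntegrable f a) (hint : Integrable fun w : ℝ => laplace f (a + w * I))
    {y : ℝ} (hy : 0 ≤ y) :
    ‖f y‖ ≤ Real.exp (a * y) * ∫ w : ℝ, ‖laplace f (a + w * I)‖ := by
  -- `v` is continuous because `f 0 = 0`, so Fourier inversion applies to it.
  set v : ℝ → E := fun y => cexp (-(a * y)) • f (max y 0)
  have hv : v = (Ioi 0).indicator fun y : ℝ => cexp (-(a * y)) • f y := by
    ext t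
    rcases lt_or_ge 0 t with ht | ht
    · simp [v, ht, ht.le]
    · simp [v, ht, hf0]
  have hFv : 𝓕 v = fun w : ℝ => laplace f (a + (2 * Real.pi * w : ℝ) * I) := by
    rw [hv]
    exact funext (fourier_indicator_exp_smul f a)
  have hv_int : Integrable v := by
    rw [hv]
    exact hfa.integrable_indicator measurableSet_Ioi
  have hFv_int : Integrable (𝓕 v) := by
    rw [hFv]
    exact hint.comp_mul_left' (by positivity)
  have hvy : ‖v y‖ ≤ ∫ w : ℝ, ‖laplace f (a + w * I)‖ := calc
    ‖v y‖ ≤ ∫ w, ‖𝓕 v w‖ := norm_le_integral_norm_fourier (by fun_prop) hv_int hFv_int y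
    _ = |(2 * Real.pi)⁻¹| * ∫ w : ℝ, ‖laplace f (a + w * I)‖ := by
      rw [hFv, Measure.integral_comp_mul_left (fun w : ℝ => ‖laplace f (a + w * I)‖), smul_eq_mul]
    _ ≤ ∫ w : ℝ, ‖laplace f (a + w * I)‖ := by
      refine mul_le_of_le_one_left (by positivity) ?_
      rw [abs_of_pos (by positivity)]
      exact inv_le_one_of_one_le₀ (by linarith [Real.pi_gt_three])
  have hfy : f y = cexp (a * y) • v y := by
    simp [v, hy, smul_smul, ← Complex.exp_add]
  rw [hfy, norm_smul, Complex.norm_exp, ← ofReal_mul, ofReal_re]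
  gcongr

theorem norm_le_mul_rpow_of_norm_laplace_le {k : ℝ} {G : ℝ → ℝ} (hf : Continuous f) (hf0 : f 0 = 0)
    (hL : ∀ a : ℝ, 0 < a → LaplaceIntegrable f a) (hG : Integrable G)
    (hle : ∀ a : ℝ, 0 < a → a ≤ 1 → ∀ᵐ w : ℝ, ‖laplace f (a + w * I)‖ ≤ a ^ (-k) * G w)
    {y : ℝ} (hy : 1 ≤ y) : ‖f y‖ ≤ Real.exp 1 * (∫ w, G w) * y ^ k := by
  have hy0 : 0 < y := by linarith
  have ha : 0 < y⁻¹ := inv_pos.2 hy0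
  have hle_y := hle y⁻¹ ha (inv_le_one_of_one_le₀ hy)
  have hcont : Continuous fun w : ℝ => laplace f ((y⁻¹ : ℝ) + w * I) := by
    refine continuous_iff_continuousAt.2 fun w =>
      ContinuousAt.comp (g := laplace f) ?_ (by fun_prop)
    exact (differentiableAt_laplace (hL (y⁻¹ / 2) (half_pos ha))
      (by simpa using hy0)).continuousAt
  have hbound_int : Integrable fun w => y⁻¹ ^ (-k) * G w := hG.const_mul _
  have hint : Integrable fun w : ℝ => laplace f ((y⁻¹ : ℝ) + w * I) :=
    hbound_int.mono' hcont.aestronglyMeasurable hle_y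
  calc ‖f y‖ ≤ Real.exp (y⁻¹ * y) * ∫ w : ℝ, ‖laplace f ((y⁻¹ : ℝ) + w * I)‖ :=
        norm_le_exp_mul_integral_norm_laplace hf hf0 (hL _ ha) hint hy0.le
    _ ≤ Real.exp (y⁻¹ * y) * ∫ w, y⁻¹ ^ (-k) * G w :=
        mul_le_mul_of_nonneg_left (integral_mono_ae hint.norm hbound_int hle_y) (by positivity)
    _ = Real.exp 1 * (∫ w, G w) * y ^ k := by
        rw [inv_mul_cancel₀ hy0.ne', integral_const_mul, Real.inv_rpow hy0.le, Real.rpow_neg hy0.le,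
          inv_inv]
        ring

end Laplace

section Relaxation

/-- The Mittag-Leffler relaxation function `y ↦ E_λ(c y^λ)` on `y ≥ 0`. -/
noncomputable def mlRelax (lam : ℝ) (c : ℂ) (y : ℝ) : ℂ :=
  mlE lam (c * (y ^ lam : ℝ))

variable {lam : ℝ} {c s : ℂ}

theorem continuous_mlRelax (hlam : 0 < lam) (c : ℂ) : Continuous (mlRelax lam c) :=
  (differentiable_mlE hlam).continuous.comp <|
    continuous_const.mul (continuous_ofReal.comp (Real.continuous_rpow_const hlam.le))

theorem mlRelax_apply_zero (hlam : lam ≠ 0) (c : ℂ) : mlRelax lam c 0 = 1 := by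
  simp [mlRelax, Real.zero_rpow hlam]

theorem integral_mlRelax_term (hlam : 0 < lam) {a : ℝ} (ha : 0 < a) (c : ℂ) (n : ℕ) :
    ∫ y in Ioi (0 : ℝ), cexp (-(a * y)) * ((c * (y ^ lam : ℝ)) ^ n / Gamma (lam * n + 1)) =
      (a : ℂ)⁻¹ * (c / (a : ℂ) ^ (lam : ℂ)) ^ n := by
  have hre : 0 < ((lam : ℂ) * n + 1).re := by
    rw [← ofReal_natCast, ← ofReal_mul, add_re, ofReal_re, one_re]
    positivity
  have hΓ : Gamma (lam * n + 1) ≠ 0 := Gamma_ne_zero_of_re_pos hre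
  have ha0 : (a : ℂ) ≠ 0 := ofReal_ne_zero.2 ha.ne'
  calc _ = ∫ y in Ioi (0 : ℝ), c ^ n / Gamma (lam * n + 1) *
        ((y : ℂ) ^ ((lam : ℂ) * n + 1 - 1) * cexp (-(a * y))) := by
        refine setIntegral_congr_fun measurableSet_Ioi fun y (hy : 0 < y) => ?_
        simp only [add_sub_cancel_right, cpow_mul_nat, ofReal_cpow hy.le, mul_pow]
        ring
    _ = (a : ℂ)⁻¹ * (c / (a : ℂ) ^ (lam : ℂ)) ^ n := by
        rw [integral_const_mul, integral_cpow_mul_exp_neg_mul_Ioi hre ha,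
          cpow_add _ _ (one_div_ne_zero ha0), cpow_mul_nat, cpow_one, one_div,
          inv_cpow _ _ (by simp [arg_ofReal_of_nonneg ha.le, Real.pi_ne_zero.symm]), div_pow,
          inv_pow]
        field_simp

theorem hasSum_laplace_mlRelax (hlam : 0 < lam) {a b : ℝ} (hb : 0 < b) (hcb : ‖c‖ < b ^ lam)
    (hab : b < a) :
    HasSum (fun n : ℕ => (a : ℂ)⁻¹ * (c / (a : ℂ) ^ (lam : ℂ)) ^ n)
      (laplace (mlRelax lam c) a) := by
  simp_rw [← integral_mlRelax_term hlam (hb.trans hab) c]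
  have hr : ‖c‖ / b ^ lam < 1 := (div_lt_one (by positivity)).2 hcb
  have hgeom := summable_geometric_of_lt_one (by positivity) hr
  refine hasSum_integral_of_dominated_convergence
    (fun n y => Real.exp (-(a - b) * y) * (‖c‖ / b ^ lam) ^ n) (fun n => ?_) (fun n => ?_)
    (.of_forall fun y => hgeom.mul_left _) ?_ (.of_forall fun y => ?_)
  · refine Continuous.aestronglyMeasurable ?_
    have := Real.continuous_rpow_const hlam.le
    fun_prop
  · filter_upwards [ae_restrict_mem measurableSet_Ioi] with y (hy : 0 < y)
    have hterm := norm_mlE_term_le hlam.le (mul_pos hb hy) (c * (y ^ lam : ℝ)) n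
    have hquot : ‖c * (y ^ lam : ℝ)‖ / (b * y) ^ lam = ‖c‖ / b ^ lam := by
      rw [norm_mul, Complex.norm_of_nonneg (by positivity), Real.mul_rpow hb.le hy.le]
      field_simp
    rw [hquot] at hterm
    calc _ ≤ Real.exp (-(a * y)) * (Real.exp (b * y) * (‖c‖ / b ^ lam) ^ n) := by
          rw [norm_mul, Complex.norm_exp, neg_re, ← ofReal_mul, ofReal_re]
          gcongr
      _ = Real.exp (-(a - b) * y) * (‖c‖ / b ^ lam) ^ n := by
          rw [← mul_assoc, ← Real.exp_add]
          ring_nf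
  · simp_rw [tsum_mul_left]
    exact (integrableOn_exp_mul_Ioi (by linarith) 0).mul_const _
  · exact (hasSum_mlE hlam (c * (y ^ lam : ℝ))).mul_left _

theorem cpow_sub_mul_laplace_mlRelax_of_lt (hlam : 0 < lam) {a b : ℝ} (hb : 0 < b)
    (hcb : ‖c‖ < b ^ lam) (hab : b < a) :
    ((a : ℂ) ^ (lam : ℂ) - c) * laplace (mlRelax lam c) a = (a : ℂ) ^ ((lam : ℂ) - 1) := by
  have ha : 0 < a := hb.trans hab
  have ha0 : (a : ℂ) ≠ 0 := ofReal_ne_zero.2 ha.ne'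
  have hnorm : ‖(a : ℂ) ^ (lam : ℂ)‖ = a ^ lam := by
    rw [norm_cpow_real, Complex.norm_of_nonneg ha.le]
  have hlt : ‖c‖ < ‖(a : ℂ) ^ (lam : ℂ)‖ := by
    rw [hnorm]
    exact hcb.trans (Real.rpow_lt_rpow hb.le hab hlam)
  have hpow : (a : ℂ) ^ (lam : ℂ) ≠ 0 := norm_pos_iff.1 ((norm_nonneg c).trans_lt hlt)
  have hne : (a : ℂ) ^ (lam : ℂ) - c ≠ 0 := fun h => hlt.ne (by rw [sub_eq_zero.1 h])
  have hr : ‖c / (a : ℂ) ^ (lam : ℂ)‖ < 1 := by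
    rw [norm_div]
    exact (div_lt_one ((norm_nonneg c).trans_lt hlt)).2 hlt
  rw [(hasSum_laplace_mlRelax hlam hb hcb hab).unique
    ((hasSum_geometric_of_norm_lt_one hr).mul_left _), cpow_sub _ _ ha0, cpow_one]
  have : 1 - c / (a : ℂ) ^ (lam : ℂ) = ((a : ℂ) ^ (lam : ℂ) - c) / (a : ℂ) ^ (lam : ℂ) := by
    field_simp
  rw [this]
  field_simp

theorem cpow_sub_mul_laplace_mlRelax (hlam : 0 < lam)
    (hL : ∀ a : ℝ, 0 < a → LaplaceIntegrable (mlRelax lam c) a) (hs : 0 < s.re) :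
    (s ^ (lam : ℂ) - c) * laplace (mlRelax lam c) s = s ^ ((lam : ℂ) - 1) := by
  set U : Set ℂ := {s | 0 < s.re}
  have hUo : IsOpen U := isOpen_lt continuous_const continuous_re
  have hUc : IsPreconnected U := (convex_halfSpace_re_gt 0).isPreconnected
  have hlap : DifferentiableOn ℂ (laplace (mlRelax lam c)) U := fun z (hz : 0 < z.re) =>
    (differentiableAt_laplace (hL (z.re / 2) (by positivity))
      (by rw [ofReal_re]; linarith)).differentiableWithinAt
  have hcpow : ∀ r : ℂ, DifferentiableOn ℂ (fun s : ℂ => s ^ r) U := fun r z hz =>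
    (differentiableAt_id.cpow_const (Or.inl hz)).differentiableWithinAt
  obtain ⟨b, hb, hcb⟩ := exists_pos_lt_rpow hlam ‖c‖
  have htend : Tendsto ((↑) : ℝ → ℂ) (𝓝[>] (b + 1)) (𝓝[≠] ((b + 1 : ℝ) : ℂ)) :=
    continuous_ofReal.continuousWithinAt.tendsto_nhdsWithin fun x (hx : b + 1 < x) =>
      ofReal_injective.ne hx.ne'
  have hleft := (((hcpow lam).sub_const c).mul hlap).analyticOnNhd hUo
  refine hleft.eqOn_of_preconnected_of_frequently_eq ((hcpow _).analyticOnNhd hUo) hUc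
    (z₀ := ((b + 1 : ℝ) : ℂ)) ?_ ?_ hs
  · rw [mem_ofPred_eq, ofReal_re]
    positivity
  · refine htend.frequently (Eventually.frequently ?_)
    filter_upwards [self_mem_nhdsWithin] with x (hx : b + 1 < x)
    exact cpow_sub_mul_laplace_mlRelax_of_lt hlam hb hcb (by linarith)

theorem cpow_ne_of_laplaceIntegrable_mlRelax (hlam : 0 < lam)
    (hL : ∀ a : ℝ, 0 < a → LaplaceIntegrable (mlRelax lam c) a) (hs : 0 < s.re) :
    s ^ (lam : ℂ) ≠ c := by
  intro h
  have hs0 : s ≠ 0 := by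
    rintro rfl
    simp at hs
  have := cpow_sub_mul_laplace_mlRelax hlam hL hs
  rw [h, sub_self, zero_mul, eq_comm, cpow_eq_zero_iff] at this
  exact hs0 this.1

theorem laplace_mlRelax_sub_one (hlam : 0 < lam)
    (hL : ∀ a : ℝ, 0 < a → LaplaceIntegrable (mlRelax lam c) a) (hs : 0 < s.re) :
    laplace (fun y => mlRelax lam c y - 1) s = c / (s * (s ^ (lam : ℂ) - c)) := by
  have hs0 : s ≠ 0 := by
    rintro rfl
    simp at hs
  have hne := sub_ne_zero.2 (cpow_ne_of_laplaceIntegrable_mlRelax hlam hL hs)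
  have hLs : LaplaceIntegrable (mlRelax lam c) s := (hL s.re hs).mono (ofReal_re _).le
  have hlap := cpow_sub_mul_laplace_mlRelax hlam hL hs
  rw [cpow_sub _ _ hs0, cpow_one, mul_comm, ← eq_div_iff hne] at hlap
  rw [laplace_sub hLs (laplaceIntegrable_const hs 1), laplace_const hs, hlap, smul_eq_mul]
  field_simp
  ring

end Relaxation

section CpowRightHalfPlane

variable {lam : ℝ} {c s : ℂ}

theorem injOn_cpow_const_re_nonneg (hlam : 0 < lam) (hlam2 : lam < 2) :
    InjOn (fun s : ℂ => s ^ (lam : ℂ)) {s | 0 ≤ s.re} := by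
  refine LeftInvOn.injOn (f₁' := fun z => z ^ ((lam⁻¹ : ℝ) : ℂ)) fun s (hs : 0 ≤ s.re) => ?_
  have harg : |lam * s.arg| < Real.pi := by
    rw [abs_mul, abs_of_pos hlam]
    nlinarith [abs_arg_le_pi_div_two_iff.2 hs, Real.pi_pos]
  have him : (log s * lam).im = lam * s.arg := by
    rw [im_mul_ofReal, log_im, mul_comm]
  change (s ^ (lam : ℂ)) ^ ((lam⁻¹ : ℝ) : ℂ) = s
  rw [← cpow_mul _ (by rw [him]; exact (abs_lt.1 harg).1) (by rw [him]; exact (abs_lt.1 harg).2.le),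
    ← ofReal_mul, mul_inv_cancel₀ hlam.ne', ofReal_one, cpow_one]

theorem continuousOn_cpow_const_re_nonneg (hlam : 0 < lam) :
    ContinuousOn (fun s : ℂ => s ^ (lam : ℂ)) {s | 0 ≤ s.re} := fun _ hs =>
  (continuousAt_cpow_const_of_re_pos (Or.inl hs) hlam).continuousWithinAt

theorem isCompact_re_nonneg_norm_le (R : ℝ) : IsCompact {s : ℂ | 0 ≤ s.re ∧ ‖s‖ ≤ R} := by
  convert (isCompact_closedBall (0 : ℂ) R).inter_left
    (isClosed_le continuous_const continuous_re : IsClosed {s : ℂ | 0 ≤ s.re}) using 1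
  ext s
  simp

theorem exists_mul_norm_sub_le_norm_cpow_sub_cpow (hlam : 0 < lam) (hlam2 : lam < 2) {s₀ : ℂ}
    (hs₀ : s₀ ∈ slitPlane) (hre : 0 ≤ s₀.re) (R : ℝ) :
    ∃ m : ℝ, 0 < m ∧ ∀ s : ℂ, 0 ≤ s.re → ‖s‖ ≤ R →
      m * ‖s - s₀‖ ≤ ‖s ^ (lam : ℂ) - s₀ ^ (lam : ℂ)‖ := by
  set g : ℂ → ℂ := dslope (fun s => s ^ (lam : ℂ)) s₀
  have hderiv : HasDerivAt (fun s : ℂ => s ^ (lam : ℂ)) (lam * s₀ ^ ((lam : ℂ) - 1)) s₀ := by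
    simpa using (hasDerivAt_id s₀).cpow_const hs₀
  have hg_cont : ContinuousOn g {s | 0 ≤ s.re ∧ ‖s‖ ≤ R} := by
    rintro s ⟨hs, -⟩
    rcases eq_or_ne s s₀ with rfl | hne
    · exact (continuousAt_dslope_same.2 hderiv.differentiableAt).continuousWithinAt
    · exact ((continuousAt_dslope_of_ne hne).2
        (continuousAt_cpow_const_of_re_pos (Or.inl hs) hlam)).continuousWithinAt
  have hg_ne : ∀ s ∈ {s : ℂ | 0 ≤ s.re ∧ ‖s‖ ≤ R}, 0 < ‖g s‖ := by
    rintro s ⟨hs, -⟩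
    rw [norm_pos_iff]
    rcases eq_or_ne s s₀ with rfl | hne
    · simp only [g, dslope_same, hderiv.deriv]
      simp [hlam.ne', cpow_eq_zero_iff, slitPlane_ne_zero hs₀]
    · simp only [g, dslope_of_ne _ hne, slope_def_field]
      refine div_ne_zero (sub_ne_zero.2 fun h => hne ?_) (sub_ne_zero.2 hne)
      exact injOn_cpow_const_re_nonneg hlam hlam2 hs hre h
  obtain ⟨m, hm, hle⟩ :=
    (isCompact_re_nonneg_norm_le R).exists_forall_le' hg_cont.norm hg_ne
  refine ⟨m, hm, fun s hs hsR => ?_⟩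
  have hslope : s ^ (lam : ℂ) - s₀ ^ (lam : ℂ) = (s - s₀) * g s := by
    simpa using (sub_smul_dslope (fun s : ℂ => s ^ (lam : ℂ)) s₀ s).symm
  rw [hslope, norm_mul, mul_comm]
  gcongr
  exact hle s ⟨hs, hsR⟩

theorem exists_mul_norm_sub_le_norm_cpow_sub (hlam : 0 < lam) (hlam2 : lam < 2) (hc : c ≠ 0)
    (hroot : ∀ s : ℂ, 0 < s.re → s ^ (lam : ℂ) ≠ c) :
    ∃ w₀ : ℝ, w₀ ≠ 0 ∧ ∀ R : ℝ, ∃ m : ℝ, 0 < m ∧ ∀ s : ℂ, 0 ≤ s.re → ‖s‖ ≤ R →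
      m * ‖s - w₀ * I‖ ≤ ‖s ^ (lam : ℂ) - c‖ := by
  by_cases hline : ∃ w₀ : ℝ, ((w₀ : ℂ) * I) ^ (lam : ℂ) = c
  · obtain ⟨w₀, rfl⟩ := hline
    have hw₀ : w₀ ≠ 0 := by
      rintro rfl
      simp [hlam.ne'] at hc
    exact ⟨w₀, hw₀, fun R => exists_mul_norm_sub_le_norm_cpow_sub_cpow hlam hlam2
      (Or.inr (by simpa)) (by simp) R⟩
  · refine ⟨1, one_ne_zero, fun R => ?_⟩
    have hne : ∀ s ∈ {s : ℂ | 0 ≤ s.re ∧ ‖s‖ ≤ R}, 0 < ‖s ^ (lam : ℂ) - c‖ := by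
      rintro s ⟨hs, -⟩
      rw [norm_pos_iff, sub_ne_zero]
      rcases hs.lt_or_eq with hs | hs
      · exact hroot s hs
      · exact fun h => hline ⟨s.im, by rwa [show (s.im : ℂ) * I = s from
          Complex.ext (by simpa using hs) (by simp)]⟩
    obtain ⟨m, hm, hle⟩ := (isCompact_re_nonneg_norm_le R).exists_forall_le'
      (((continuousOn_cpow_const_re_nonneg hlam).mono fun s hs => hs.1).sub continuousOn_const).norm
      hne
    refine ⟨m / (|R| + 1), by positivity, fun s hs hsR => ?_⟩
    have hdist : ‖s - (1 : ℝ) * I‖ ≤ |R| + 1 :=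
      (norm_sub_le _ _).trans (by simpa using hsR.trans (le_abs_self R))
    calc m / (|R| + 1) * ‖s - (1 : ℝ) * I‖ ≤ m / (|R| + 1) * (|R| + 1) := by gcongr
      _ = m := by field_simp
      _ ≤ ‖s ^ (lam : ℂ) - c‖ := hle s ⟨hs, hsR⟩

theorem half_norm_rpow_le_norm_cpow_sub (hs : 2 * ‖c‖ ≤ ‖s‖ ^ lam) :
    ‖s‖ ^ lam / 2 ≤ ‖s ^ (lam : ℂ) - c‖ := by
  have := norm_sub_norm_le (s ^ (lam : ℂ)) c
  rw [norm_cpow_real] at this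
  linarith

theorem eq_two_and_arg_eq_pi_of_forall_cpow_ne (hlam : 2 ≤ lam) (hc : c ≠ 0)
    (hroot : ∀ s : ℂ, 0 < s.re → s ^ (lam : ℂ) ≠ c) : lam = 2 ∧ c.arg = Real.pi := by
  have hlam0 : 0 < lam := by linarith
  have hpi := Real.pi_pos
  have harg : |c.arg / lam| ≤ Real.pi / 2 := by
    rw [abs_div, abs_of_pos hlam0]
    have := abs_arg_le_pi c
    gcongr
  have him : (log c * ((lam⁻¹ : ℝ) : ℂ)).im = c.arg / lam := by
    rw [im_mul_ofReal, log_im, div_eq_mul_inv]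
  have hpow : (c ^ ((lam⁻¹ : ℝ) : ℂ)) ^ (lam : ℂ) = c := by
    rw [← cpow_mul _ (by rw [him]; linarith [(abs_le.1 harg).1])
      (by rw [him]; linarith [(abs_le.1 harg).2]), ← ofReal_mul, inv_mul_cancel₀ hlam0.ne',
      ofReal_one, cpow_one]
  have hre : ¬ 0 < (c ^ ((lam⁻¹ : ℝ) : ℂ)).re := fun h => hroot _ h hpow
  have hge : Real.pi / 2 ≤ |c.arg / lam| := by
    by_contra! hlt
    refine hre ?_
    rw [cpow_def_of_ne_zero hc, exp_re, him]
    exact mul_pos (Real.exp_pos _) (Real.cos_pos_of_mem_Ioo (abs_lt.1 hlt))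
  rw [abs_div, abs_of_pos hlam0, le_div_iff₀ hlam0] at hge
  have hle := abs_arg_le_pi c
  refine ⟨by nlinarith, ?_⟩
  rcases abs_choice c.arg with h | h
  · nlinarith
  · nlinarith [neg_pi_lt_arg c]

end CpowRightHalfPlane

section Growth

variable {lam k : ℝ} {c s : ℂ}

theorem norm_inv_le_re_rpow_mul_abs_im_rpow (hre : 0 < s.re) (him : s.im ≠ 0) (hk0 : 0 ≤ k)
    (hk1 : k ≤ 1) : ‖s‖⁻¹ ≤ s.re ^ (-k) * |s.im| ^ (k - 1) := by
  have hs : 0 < ‖s‖ := hre.trans_le (re_le_norm s)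
  calc ‖s‖⁻¹ = ‖s‖ ^ (-k) * ‖s‖ ^ (k - 1) := by
        rw [← Real.rpow_add hs, ← Real.rpow_neg_one]
        ring_nf
    _ ≤ s.re ^ (-k) * |s.im| ^ (k - 1) :=
        mul_le_mul (Real.rpow_le_rpow_of_nonpos hre (re_le_norm s) (by linarith))
          (Real.rpow_le_rpow_of_nonpos (abs_pos.2 him) (abs_im_le_norm s) (by linarith))
          (by positivity) (by positivity)

theorem norm_div_mul_cpow_sub_le_of_mul_norm_sub_le {m w₀ : ℝ} (hm : 0 < m) (hw₀ : w₀ ≠ 0)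
    (hre : 0 < s.re) (him : s.im ≠ 0) (him' : s.im ≠ w₀)
    (hle : m * ‖s - w₀ * I‖ ≤ ‖s ^ (lam : ℂ) - c‖) (hk0 : 0 ≤ k) (hk1 : k ≤ 1) :
    ‖c / (s * (s ^ (lam : ℂ) - c))‖ ≤
      s.re ^ (-k) * (‖c‖ / (m * |w₀|) * (|s.im| ^ (k - 1) + |s.im - w₀| ^ (k - 1))) := by
  set z : ℂ := s - w₀ * I
  have hzre : z.re = s.re := by simp [z]
  have hzim : z.im = s.im - w₀ := by simp [z]
  have hs : 0 < ‖s‖ := hre.trans_le (re_le_norm s)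
  have hz : 0 < ‖z‖ := (hzre ▸ hre).trans_le (re_le_norm z)
  have hsum : |w₀| ≤ ‖s‖ + ‖z‖ := by simpa [z] using norm_sub_le s z
  have hsinv := norm_inv_le_re_rpow_mul_abs_im_rpow hre him hk0 hk1
  have hzinv := norm_inv_le_re_rpow_mul_abs_im_rpow (s := z) (hzre ▸ hre)
    (hzim ▸ sub_ne_zero.2 him') hk0 hk1
  rw [hzre, hzim] at hzinv
  rw [norm_div, norm_mul]
  calc ‖c‖ / (‖s‖ * ‖s ^ (lam : ℂ) - c‖) ≤ ‖c‖ / (‖s‖ * (m * ‖z‖)) := by gcongr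
    _ = ‖c‖ / (m * |w₀|) * (|w₀| / (‖s‖ * ‖z‖)) := by
        have := abs_pos.2 hw₀
        field_simp
    _ ≤ ‖c‖ / (m * |w₀|) * ((‖s‖ + ‖z‖) / (‖s‖ * ‖z‖)) := by gcongr
    _ = ‖c‖ / (m * |w₀|) * (‖s‖⁻¹ + ‖z‖⁻¹) := by
        field_simp
        ring
    _ ≤ ‖c‖ / (m * |w₀|) *
        (s.re ^ (-k) * |s.im| ^ (k - 1) + s.re ^ (-k) * |s.im - w₀| ^ (k - 1)) := by gcongr
    _ = _ := by ring

theorem norm_div_mul_cpow_sub_le_of_two_mul_le (hs : s ≠ 0) (hsc : 2 * ‖c‖ ≤ ‖s‖ ^ lam) :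
    ‖c / (s * (s ^ (lam : ℂ) - c))‖ ≤ 2 * ‖c‖ * ‖s‖ ^ (-(1 + lam)) := by
  have hs0 : 0 < ‖s‖ := norm_pos_iff.2 hs
  have := half_norm_rpow_le_norm_cpow_sub hsc
  rw [norm_div, norm_mul, Real.rpow_neg hs0.le, Real.rpow_add hs0, Real.rpow_one]
  calc ‖c‖ / (‖s‖ * ‖s ^ (lam : ℂ) - c‖) ≤ ‖c‖ / (‖s‖ * (‖s‖ ^ lam / 2)) := by gcongr
    _ = _ := by field_simp

theorem integrableOn_abs_sub_rpow {r : ℝ} (hr : -1 < r) (w₀ a b : ℝ) :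
    IntegrableOn (fun w : ℝ => |w - w₀| ^ r) (Ioc a b) := by
  have h := ((intervalIntegral.intervalIntegrable_cpow' (a := a - w₀) (b := b - w₀) (r := (r : ℂ))
    (by simpa using hr)).norm.comp_sub_right w₀).1
  simpa only [norm_cpow_real, norm_real, Real.norm_eq_abs, sub_add_cancel] using h

theorem norm_rpow_neg_le_mul_one_add_abs_im_rpow {r : ℝ} (hr : 0 ≤ r) (him : 1 ≤ |s.im|) :
    ‖s‖ ^ (-r) ≤ 2 ^ r * (1 + |s.im|) ^ (-r) := by
  have hle : (1 + |s.im|) / 2 ≤ ‖s‖ := by linarith [abs_im_le_norm s]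
  calc ‖s‖ ^ (-r) ≤ ((1 + |s.im|) / 2) ^ (-r) :=
        Real.rpow_le_rpow_of_nonpos (by positivity) hle (by linarith)
    _ = 2 ^ r * (1 + |s.im|) ^ (-r) := by
        rw [Real.div_rpow (by positivity) (by norm_num), Real.rpow_neg zero_le_two, div_inv_eq_mul,
          mul_comm]

theorem norm_div_mul_cpow_sub_le_of_two_mul_le_abs_im_rpow (hlam : 0 ≤ lam) (him : 1 ≤ |s.im|)
    (hsc : 2 * ‖c‖ ≤ |s.im| ^ lam) :
    ‖c / (s * (s ^ (lam : ℂ) - c))‖ ≤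
      2 * ‖c‖ * (2 ^ (1 + lam) * (1 + |s.im|) ^ (-(1 + lam))) := by
  have hs : |s.im| ≤ ‖s‖ := abs_im_le_norm s
  refine (norm_div_mul_cpow_sub_le_of_two_mul_le (norm_pos_iff.1 (by linarith))
    (hsc.trans (by gcongr))).trans ?_
  exact mul_le_mul_of_nonneg_left (norm_rpow_neg_le_mul_one_add_abs_im_rpow (by linarith) him)
    (by positivity)

theorem exists_norm_div_mul_cpow_sub_le_of_norm_le (hlam : 0 < lam) (hlam2 : lam < 2) (hc : c ≠ 0)
    (hroot : ∀ s : ℂ, 0 < s.re → s ^ (lam : ℂ) ≠ c) (hk0 : 0 ≤ k) (hk1 : k ≤ 1) (R : ℝ) :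
    ∃ C w₀ : ℝ, ∀ s : ℂ, 0 < s.re → ‖s‖ ≤ R → s.im ≠ 0 → s.im ≠ w₀ →
      ‖c / (s * (s ^ (lam : ℂ) - c))‖ ≤
        s.re ^ (-k) * (C * (|s.im| ^ (k - 1) + |s.im - w₀| ^ (k - 1))) := by
  obtain ⟨w₀, hw₀, hm⟩ := exists_mul_norm_sub_le_norm_cpow_sub hlam hlam2 hc hroot
  obtain ⟨m, hm, hle⟩ := hm R
  exact ⟨‖c‖ / (m * |w₀|), w₀, fun s hre hsR h0 hw => norm_div_mul_cpow_sub_le_of_mul_norm_sub_le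
    hm hw₀ hre h0 hw (hle s hre.le hsR) hk0 hk1⟩

theorem exists_integrable_norm_div_mul_cpow_sub_le (hlam : 0 < lam) (hlam2 : lam < 2) (hc : c ≠ 0)
    (hroot : ∀ s : ℂ, 0 < s.re → s ^ (lam : ℂ) ≠ c) (hk0 : 0 < k) (hk1 : k ≤ 1) :
    ∃ G : ℝ → ℝ, Integrable G ∧ ∀ e : ℝ, 0 < e → e ≤ 1 → ∀ᵐ w : ℝ,
      ‖c / ((e + w * I) * ((e + w * I) ^ (lam : ℂ) - c))‖ ≤ e ^ (-k) * G w := by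
  obtain ⟨b, hb, hcb⟩ := exists_pos_lt_rpow hlam (2 * ‖c‖)
  set R : ℝ := max 1 b
  have hRc : 2 * ‖c‖ ≤ R ^ lam := hcb.le.trans (by gcongr; exact le_max_right _ _)
  obtain ⟨C, w₀, hle⟩ :=
    exists_norm_div_mul_cpow_sub_le_of_norm_le hlam hlam2 hc hroot hk0.le hk1 (R + 1)
  set near : ℝ → ℝ := fun w => C * (|w| ^ (k - 1) + |w - w₀| ^ (k - 1))
  set far : ℝ → ℝ := fun w => 2 * ‖c‖ * (2 ^ (1 + lam) * (1 + |w|) ^ (-(1 + lam)))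
  have hnear : IntegrableOn near (Ioc (-R) R) := by
    have h (w₁ : ℝ) := integrableOn_abs_sub_rpow (r := k - 1) (by linarith) w₁ (-R) R
    simpa only [IntegrableOn, near, Pi.add_apply, sub_zero] using ((h 0).add (h w₀)).const_mul C
  have hfar : Integrable far :=
    ((integrable_one_add_norm (by simpa using hlam)).const_mul _).const_mul _
  refine ⟨fun w => (Ioc (-R) R).indicator near w + far w,
    (hnear.integrable_indicator measurableSet_Ioc).add hfar, fun e he he1 => ?_⟩
  filter_upwards [Measure.ae_ne volume 0, Measure.ae_ne volume w₀] with w h0 hw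
  have hfar0 : 0 ≤ far w := by positivity
  obtain ⟨s, hs⟩ : ∃ s : ℂ, s = e + w * I := ⟨_, rfl⟩
  obtain ⟨rfl, rfl⟩ : s.re = e ∧ s.im = w := by simp [hs]
  rw [← hs]
  by_cases hwR : s.im ∈ Ioc (-R) R
  · have hsR : ‖s‖ ≤ R + 1 := by
      have := norm_le_abs_re_add_abs_im s
      rw [abs_of_pos he] at this
      linarith [abs_le.2 ⟨hwR.1.le, hwR.2⟩]
    rw [indicator_of_mem hwR]
    exact (hle s he hsR h0 hw).trans (by gcongr; exact le_add_of_nonneg_right hfar0)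
  · have hRw : R ≤ |s.im| := by
      contrapose! hwR
      exact ⟨(abs_lt.1 hwR).1, (abs_lt.1 hwR).2.le⟩
    rw [indicator_of_notMem hwR, zero_add]
    refine (norm_div_mul_cpow_sub_le_of_two_mul_le_abs_im_rpow hlam.le
      ((le_max_left _ _).trans hRw) (hRc.trans (by gcongr))).trans ?_
    exact le_mul_of_one_le_left hfar0
      (Real.one_le_rpow_of_pos_of_le_one_of_nonpos he he1 (by linarith))

theorem exists_norm_mlRelax_le_of_lt_two (hlam : 0 < lam) (hlam2 : lam < 2) (hc : c ≠ 0)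
    (hL : ∀ a : ℝ, 0 < a → LaplaceIntegrable (mlRelax lam c) a) (hk0 : 0 < k) (hk1 : k ≤ 1) :
    ∃ C : ℝ, ∀ y : ℝ, 1 ≤ y → ‖mlRelax lam c y‖ ≤ C * y ^ k := by
  obtain ⟨G, hG, hle⟩ := exists_integrable_norm_div_mul_cpow_sub_le hlam hlam2 hc
    (fun s => cpow_ne_of_laplaceIntegrable_mlRelax hlam hL) hk0 hk1
  have hf_cont : Continuous fun y => mlRelax lam c y - 1 :=
    (continuous_mlRelax hlam c).sub continuous_const
  have hfL (a : ℝ) (ha : 0 < a) : LaplaceIntegrable (fun y => mlRelax lam c y - 1) a :=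
    (hL a ha).sub (laplaceIntegrable_const (by simpa using ha) 1)
  refine ⟨Real.exp 1 * (∫ w, G w) + 1, fun y hy => ?_⟩
  have hf := norm_le_mul_rpow_of_norm_laplace_le hf_cont
    (by rw [mlRelax_apply_zero hlam.ne', sub_self]) hfL hG (fun e he he1 => by
      filter_upwards [hle e he he1] with w hw
      rwa [laplace_mlRelax_sub_one hlam hL (by simpa using he)]) hy
  calc ‖mlRelax lam c y‖ ≤ ‖mlRelax lam c y - 1‖ + 1 := by
        simpa using norm_le_norm_sub_add (mlRelax lam c y) 1
    _ ≤ Real.exp 1 * (∫ w, G w) * y ^ k + y ^ k :=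
        add_le_add hf (Real.one_le_rpow hy hk0.le)
    _ = (Real.exp 1 * (∫ w, G w) + 1) * y ^ k := by ring

theorem norm_mlRelax_two_le_one (hc : c.arg = Real.pi) (y : ℝ) : ‖mlRelax 2 c y‖ ≤ 1 := by
  obtain ⟨hre, him⟩ := arg_eq_pi_iff.1 hc
  obtain ⟨r, rfl⟩ : ∃ r : ℝ, (r : ℂ) = c := ⟨c.re, Complex.ext rfl him.symm⟩
  rw [ofReal_re] at hre
  have hsq : (r : ℂ) * (y ^ (2 : ℝ) : ℝ) = -(((Real.sqrt (-r) * y : ℝ) : ℂ) ^ 2) := by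
    rw [← ofReal_pow, mul_pow, Real.sq_sqrt (by linarith), Real.rpow_two]
    push_cast
    ring
  rw [mlRelax, hsq, mlE_two_neg_sq, ← ofReal_cos, norm_real]
  exact Real.abs_cos_le_one _

theorem exists_norm_mlRelax_le (hlam : 0 < lam)
    (hL : ∀ a : ℝ, 0 < a → LaplaceIntegrable (mlRelax lam c) a) (hk0 : 0 < k) (hk1 : k ≤ 1) :
    ∃ C : ℝ, ∀ y : ℝ, 1 ≤ y → ‖mlRelax lam c y‖ ≤ C * y ^ k := by
  rcases eq_or_ne c 0 with rfl | hc
  · refine ⟨1, fun y hy => ?_⟩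
    simpa [mlRelax] using Real.one_le_rpow hy hk0.le
  rcases lt_or_ge lam 2 with hlam2 | hlam2
  · exact exists_norm_mlRelax_le_of_lt_two hlam hlam2 hc hL hk0 hk1
  · obtain ⟨rfl, harg⟩ := eq_two_and_arg_eq_pi_of_forall_cpow_ne hlam2 hc
      fun s => cpow_ne_of_laplaceIntegrable_mlRelax hlam hL
    refine ⟨1, fun y hy => (norm_mlRelax_two_le_one harg y).trans ?_⟩
    simpa using Real.one_le_rpow hy hk0.le

end Growth

theorem exists_mul_pow_le_norm_of_analyticAt {𝕜 F : Type*} [NontriviallyNormedField 𝕜]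
    [NormedAddCommGroup F] [NormedSpace 𝕜 F] {f : 𝕜 → F} {z₀ : 𝕜} (hf : AnalyticAt 𝕜 f z₀)
    (hne : ¬ ∀ᶠ z in 𝓝 z₀, f z = 0) :
    ∃ c : ℝ, 0 < c ∧ ∃ j : ℕ, ∀ᶠ z in 𝓝 z₀, c * ‖z - z₀‖ ^ j ≤ ‖f z‖ := by
  obtain ⟨j, g, hg, hg0, hfg⟩ := hf.exists_eventuallyEq_pow_smul_nonzero_iff.2 hne
  have hg_norm : 0 < ‖g z₀‖ := norm_pos_iff.2 hg0
  refine ⟨‖g z₀‖ / 2, half_pos hg_norm, j, ?_⟩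
  filter_upwards [hfg, hg.continuousAt.norm.eventually_const_lt (half_lt_self hg_norm)]
    with z hz hgz
  rw [hz, norm_smul, norm_pow, mul_comm]
  gcongr

section ChangeOfVariable

variable {E : Type*} [NormedAddCommGroup E] [NormedSpace ℝ E] {f : ℝ → E} {b : ℝ}

theorem integrableAtFilter_atTop_of_comp_rpow_neg (hb : 0 < b)
    (hf : IntegrableAtFilter (fun t : ℝ => t ^ (-b - 1) • f (t ^ (-b))) (𝓝[>] 0)) :
    IntegrableAtFilter f atTop := by
  obtain ⟨S, hS, hfS⟩ := hf
  obtain ⟨d, hd : 0 < d, hdS⟩ := mem_nhdsGT_iff_exists_Ioo_subset.1 hS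
  have hfd : IntegrableOn (fun t : ℝ => t ^ (-b - 1) • f (t ^ (-b))) (Ioo 0 d) :=
    hfS.mono_set hdS
  have hind : IntegrableOn ((Ioi (d ^ (-b))).indicator f) (Ioi 0) := by
    rw [← integrableOn_Ioi_comp_rpow_iff' _ (neg_ne_zero.2 hb.ne')]
    refine (hfd.integrable_indicator measurableSet_Ioo).integrableOn.congr_fun (fun t ht => ?_)
      measurableSet_Ioi
    have hiff : t ^ (-b) ∈ Ioi (d ^ (-b)) ↔ t ∈ Ioo 0 d :=
      (Real.rpow_lt_rpow_iff_of_neg hd ht (neg_lt_zero.2 hb)).trans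
        ⟨fun htd => ⟨ht, htd⟩, fun htd => htd.2⟩
    by_cases htd : t ∈ Ioo 0 d
    · simp only [indicator_of_mem htd, indicator_of_mem (hiff.2 htd)]
    · simp only [indicator_of_notMem htd, indicator_of_notMem (mt hiff.1 htd), smul_zero]
  exact ⟨Ioi (d ^ (-b)), Ioi_mem_atTop _, (hind.mono_set (Ioi_subset_Ioi (by positivity))).congr_fun
    (fun y hy => indicator_of_mem hy f) measurableSet_Ioi⟩

theorem isBigO_rpow_mul_exp_neg_mul_rpow_neg {a : ℝ} (ha : 0 < a) (hb : 0 < b) (M N : ℝ) :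
    (fun t : ℝ => t ^ M * Real.exp (-a * t ^ (-b))) =O[𝓝[>] 0] fun t => t ^ N := by
  have h := (isLittleO_exp_neg_mul_rpow_atTop ha ((M - N) / b)).isBigO.comp_tendsto
    (tendsto_rpow_neg_nhdsGT_zero (neg_lt_zero.2 hb))
  refine ((isBigO_refl (fun t : ℝ => t ^ M) _).mul h).congr' (.of_forall fun t => rfl) ?_
  filter_upwards [self_mem_nhdsWithin] with t (ht : 0 < t)
  rw [Function.comp_apply, ← Real.rpow_mul ht.le, ← Real.rpow_add ht]
  congr 1
  field_simp
  ring

end ChangeOfVariable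

section Integrand

variable {lam sig tau : ℝ} {p q e1 e2 : ℂ}

/-- The integrand of the extended beta function `extBeta lam sig tau p q e1 e2`. -/
noncomputable def extBetaIntegrand (lam sig tau : ℝ) (p q e1 e2 : ℂ) (t : ℝ) : ℂ :=
  (t : ℂ) ^ (e1 - 1) * (1 - (t : ℂ)) ^ (e2 - 1) *
    mlE lam (-p / (t : ℂ) ^ (sig : ℂ)) * mlE lam (-q / (1 - (t : ℂ)) ^ (tau : ℂ))

theorem continuousOn_extBetaIntegrand (hlam : 0 < lam) (sig tau : ℝ) (p q e1 e2 : ℂ) :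
    ContinuousOn (extBetaIntegrand lam sig tau p q e1 e2) (Ioo 0 1) := by
  rintro t ⟨ht0, ht1⟩
  have hE := (differentiable_mlE hlam).continuous
  have hslit : (t : ℂ) ∈ slitPlane := Or.inl (by simpa using ht0)
  have hslit' : 1 - (t : ℂ) ∈ slitPlane := Or.inl (by simpa using ht1)
  have hcpow (a : ℂ) : ContinuousAt (fun t : ℝ => (t : ℂ) ^ a) t :=
    ContinuousAt.cpow (by fun_prop) continuousAt_const hslit
  have hcpow' (a : ℂ) : ContinuousAt (fun t : ℝ => (1 - (t : ℂ)) ^ a) t :=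
    ContinuousAt.cpow (by fun_prop) continuousAt_const hslit'
  have hml : ContinuousAt (fun t : ℝ => mlE lam (-p / (t : ℂ) ^ (sig : ℂ))) t :=
    hE.continuousAt.comp <| continuousAt_const.div (hcpow _)
      (cpow_ne_zero_iff.2 (Or.inl (slitPlane_ne_zero hslit)))
  have hml' : ContinuousAt (fun t : ℝ => mlE lam (-q / (1 - (t : ℂ)) ^ (tau : ℂ))) t :=
    hE.continuousAt.comp <| continuousAt_const.div (hcpow' _)
      (cpow_ne_zero_iff.2 (Or.inl (slitPlane_ne_zero hslit')))
  exact ((((hcpow _).mul (hcpow' _)).mul hml).mul hml').continuousWithinAt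

theorem integrableOn_extBetaIntegrand_swap
    (h : IntegrableOn (extBetaIntegrand lam sig tau p q e1 e2) (Ioo 0 1)) :
    IntegrableOn (extBetaIntegrand lam tau sig q p e2 e1) (Ioo 0 1) := by
  rw [← intervalIntegrable_iff_integrableOn_Ioo_of_le zero_le_one] at h ⊢
  convert (h.comp_sub_left 1).symm using 1
  · ext t
    simp only [extBetaIntegrand]
    push_cast
    rw [sub_sub_cancel]
    ring
  · simp
  · simp

theorem mlE_div_cpow_eq_mlRelax (hlam : lam ≠ 0) (sig : ℝ) (c : ℂ) {t : ℝ} (ht : 0 < t) :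
    mlE lam (c / (t : ℂ) ^ (sig : ℂ)) = mlRelax lam c (t ^ (-(sig / lam))) := by
  rw [mlRelax, ← Real.rpow_mul ht.le, show -(sig / lam) * lam = -sig by field_simp,
    Real.rpow_neg ht.le, ← ofReal_cpow ht.le, ofReal_inv, div_eq_mul_inv]

theorem exists_norm_mlE_div_cpow_le (hlam : 0 < lam) (hsig : 0 < sig) {c : ℂ}
    (hL : ∀ a : ℝ, 0 < a → LaplaceIntegrable (mlRelax lam c) a) {r : ℝ} (hr : 0 < r) :
    ∃ C : ℝ, 0 ≤ C ∧ ∀ t : ℝ, 0 < t → t < 1 →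
      ‖mlE lam (c / (t : ℂ) ^ (sig : ℂ))‖ ≤ C * t ^ (-r) := by
  have hb : 0 < sig / lam := div_pos hsig hlam
  obtain ⟨C, hC⟩ := exists_norm_mlRelax_le (k := min 1 (r / (sig / lam))) hlam hL (by positivity)
    (min_le_left _ _)
  have hC0 : 0 ≤ C := by simpa using (norm_nonneg _).trans (hC 1 le_rfl)
  refine ⟨C, hC0, fun t ht ht1 => ?_⟩
  rw [mlE_div_cpow_eq_mlRelax hlam.ne' sig c ht]
  refine (hC _ (Real.one_le_rpow_of_pos_of_le_one_of_nonpos ht ht1.le (by linarith))).trans ?_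
  rw [← Real.rpow_mul ht.le]
  gcongr ?_ * ?_
  refine Real.rpow_le_rpow_of_exponent_ge ht ht1.le ?_
  have := (le_div_iff₀ hb).1 (min_le_right 1 (r / (sig / lam)))
  linarith

theorem integrableOn_extBetaIntegrand_of_laplaceIntegrable (hlam : 0 < lam) (hsig : 0 < sig)
    (htau : 0 < tau) (hp : ∀ a : ℝ, 0 < a → LaplaceIntegrable (mlRelax lam (-p)) a)
    (hq : ∀ a : ℝ, 0 < a → LaplaceIntegrable (mlRelax lam (-q)) a) (he1 : 0 < e1.re)
    (he2 : 0 < e2.re) : IntegrableOn (extBetaIntegrand lam sig tau p q e1 e2) (Ioo 0 1) := by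
  obtain ⟨C₁, hC₁, hle₁⟩ := exists_norm_mlE_div_cpow_le hlam hsig hp (half_pos he1)
  obtain ⟨C₂, -, hle₂⟩ := exists_norm_mlE_div_cpow_le hlam htau hq (half_pos he2)
  have hbeta := (betaIntegral_convergent (u := ((e1.re / 2 : ℝ) : ℂ)) (v := ((e2.re / 2 : ℝ) : ℂ))
    (by simpa using he1) (by simpa using he2)).norm.const_mul (C₁ * C₂)
  rw [intervalIntegrable_iff_integrableOn_Ioo_of_le zero_le_one] at hbeta
  have hcont := continuousOn_extBetaIntegrand hlam sig tau p q e1 e2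
  refine Integrable.mono' hbeta (hcont.aestronglyMeasurable measurableSet_Ioo) ?_
  filter_upwards [ae_restrict_mem measurableSet_Ioo] with t ⟨ht0, ht1⟩
  have ht1' : 0 < 1 - t := sub_pos.2 ht1
  have hle₂_t := hle₂ (1 - t) ht1' (by linarith)
  have hsplit (x r : ℝ) (hx : 0 < x) : x ^ (r / 2 - 1) = x ^ (r - 1) * x ^ (-(r / 2)) := by
    rw [← Real.rpow_add hx]
    ring_nf
  simp only [extBetaIntegrand, ← ofReal_one, ← ofReal_sub, norm_mul,
    norm_cpow_eq_rpow_re_of_pos ht0, norm_cpow_eq_rpow_re_of_pos ht1', sub_re, ofReal_re,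
    hsplit _ _ ht0, hsplit _ _ ht1']
  calc _ ≤ t ^ (e1.re - 1) * (1 - t) ^ (e2.re - 1) * (C₁ * t ^ (-(e1.re / 2))) *
        (C₂ * (1 - t) ^ (-(e2.re / 2))) := by
        gcongr
        exact hle₁ t ht0 ht1
    _ = _ := by ring

end Integrand

section Converse

variable {lam sig tau : ℝ} {p q e1 e2 : ℂ}

theorem analyticOnNhd_one_sub_cpow_mul_mlE (hlam : 0 < lam) (tau : ℝ) (c e : ℂ) :
    AnalyticOnNhd ℂ (fun z => (1 - z) ^ e * mlE lam (c / (1 - z) ^ (tau : ℂ))) {z | z.re < 1} := by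
  refine DifferentiableOn.analyticOnNhd (fun z (hz : z.re < 1) => ?_)
    (isOpen_lt continuous_re continuous_const)
  have hslit : 1 - z ∈ slitPlane := Or.inl (by simpa using hz)
  have hcpow (a : ℂ) : DifferentiableAt ℂ (fun z : ℂ => (1 - z) ^ a) z :=
    DifferentiableAt.cpow_const (by fun_prop) hslit
  have hquot : DifferentiableAt ℂ (fun z : ℂ => c / (1 - z) ^ (tau : ℂ)) z :=
    (differentiableAt_const _).div (hcpow _)
      (cpow_ne_zero_iff.2 (Or.inl (slitPlane_ne_zero hslit)))
  exact ((hcpow e).mul ((differentiable_mlE hlam _).comp z hquot)).differentiableWithinAt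

theorem tendsto_mlE_div_cpow_atTop (hlam : 0 < lam) (htau : 0 < tau) (c : ℂ) :
    Tendsto (fun x : ℝ => mlE lam (c / (x : ℂ) ^ (tau : ℂ))) atTop (𝓝 1) := by
  have hpow : Tendsto (fun x : ℝ => c * ((x ^ (-tau) : ℝ) : ℂ)) atTop (𝓝 0) := by
    simpa using ((continuous_ofReal.tendsto' 0 0 ofReal_zero).comp
      (tendsto_rpow_neg_atTop htau)).const_mul c
  refine (((differentiable_mlE hlam).continuous.tendsto' 0 1 (mlE_zero lam)).comp hpow).congr' ?_
  filter_upwards [eventually_ge_atTop 0] with x hx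
  rw [Function.comp_apply, Real.rpow_neg hx, ofReal_inv, ofReal_cpow hx, ← div_eq_mul_inv]

theorem exists_mul_pow_le_norm_one_sub_cpow_mul_mlE (hlam : 0 < lam) (htau : 0 < tau)
    (c e : ℂ) : ∃ m : ℝ, 0 < m ∧ ∃ j : ℕ, ∀ᶠ t : ℝ in 𝓝[>] 0, m * t ^ j ≤
      ‖(1 - (t : ℂ)) ^ e * mlE lam (c / (1 - (t : ℂ)) ^ (tau : ℂ))‖ := by
  set f : ℂ → ℂ := fun z => (1 - z) ^ e * mlE lam (c / (1 - z) ^ (tau : ℂ))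
  have hf : AnalyticOnNhd ℂ f {z | z.re < 1} := analyticOnNhd_one_sub_cpow_mul_mlE hlam tau c e
  have h0 : (0 : ℂ) ∈ {z : ℂ | z.re < 1} := by simp
  have hne : ¬ ∀ᶠ z in 𝓝 0, f z = 0 := by
    -- Otherwise `f` vanishes on the half plane, but `E_λ → 1` along `t → -∞`.
    intro hzero
    obtain ⟨x, hx, hx1⟩ := (((tendsto_mlE_div_cpow_atTop hlam htau c).eventually_ne
      one_ne_zero).and (eventually_gt_atTop 0)).exists
    have hfx : f (1 - x) = 0 := hf.eqOn_zero_of_preconnected_of_eventuallyEq_zero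
      (convex_halfSpace_re_lt 1).isPreconnected h0 hzero (by simpa using hx1)
    simp only [f, sub_sub_cancel] at hfx
    exact mul_ne_zero (cpow_ne_zero_iff.2 (Or.inl (ofReal_ne_zero.2 hx1.ne'))) hx hfx
  obtain ⟨m, hm, j, hle⟩ := exists_mul_pow_le_norm_of_analyticAt (hf 0 h0) hne
  have htend : Tendsto ((↑) : ℝ → ℂ) (𝓝[>] 0) (𝓝 0) :=
    (continuous_ofReal.tendsto' 0 0 ofReal_zero).mono_left nhdsWithin_le_nhds
  refine ⟨m, hm, j, ?_⟩
  filter_upwards [htend.eventually hle, self_mem_nhdsWithin] with t hle_t (ht : 0 < t)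
  simpa [f, abs_of_pos ht] using hle_t

theorem isBigO_exp_smul_mlRelax_extBetaIntegrand (hlam : 0 < lam) (hsig : 0 < sig)
    (htau : 0 < tau) (p q e1 e2 : ℂ) {a : ℝ} (ha : 0 < a) :
    (fun t : ℝ => t ^ (-(sig / lam) - 1) • (cexp (-(a * (t ^ (-(sig / lam)) : ℝ))) •
      mlRelax lam (-p) (t ^ (-(sig / lam))))) =O[𝓝[>] 0]
        extBetaIntegrand lam sig tau p q e1 e2 := by
  obtain ⟨c, hc, j, hle⟩ := exists_mul_pow_le_norm_one_sub_cpow_mul_mlE hlam htau (-q) (e2 - 1)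
  have hweight := isBigO_rpow_mul_exp_neg_mul_rpow_neg ha (div_pos hsig hlam) (-(sig / lam) - 1)
    (e1.re - 1 + j)
  have hlow : (fun t : ℝ => t ^ (e1.re - 1 + j)) =O[𝓝[>] 0] fun t : ℝ => (t : ℂ) ^ (e1 - 1) *
      ((1 - (t : ℂ)) ^ (e2 - 1) * mlE lam (-q / (1 - (t : ℂ)) ^ (tau : ℂ))) := by
    refine IsBigO.of_bound c⁻¹ ?_
    filter_upwards [hle, self_mem_nhdsWithin] with t hle_t (ht : 0 < t)
    rw [norm_mul, norm_cpow_eq_rpow_re_of_pos ht, sub_re, one_re, le_inv_mul_iff₀ hc,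
      Real.norm_of_nonneg (by positivity), Real.rpow_add ht, Real.rpow_natCast, mul_left_comm]
    gcongr
  refine ((hweight.trans hlow).smul (isBigO_refl
    (fun t : ℝ => mlRelax lam (-p) (t ^ (-(sig / lam)))) _)).congr' ?_ ?_
  · refine .of_forall fun t => ?_
    simp only [mul_smul, smul_eq_mul, real_smul]
    push_cast
    rw [neg_mul]
  · filter_upwards [self_mem_nhdsWithin] with t (ht : 0 < t)
    rw [extBetaIntegrand, mlE_div_cpow_eq_mlRelax hlam.ne' sig _ ht]
    ring

theorem laplaceIntegrable_mlRelax_of_integrableOn_extBetaIntegrand (hlam : 0 < lam)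
    (hsig : 0 < sig) (htau : 0 < tau)
    (h : IntegrableOn (extBetaIntegrand lam sig tau p q e1 e2) (Ioo 0 1)) {a : ℝ} (ha : 0 < a) :
    LaplaceIntegrable (mlRelax lam (-p)) a := by
  set F : ℝ → ℂ := fun y => cexp (-(a * y)) • mlRelax lam (-p) y
  have hF : Continuous F := by
    have := continuous_mlRelax hlam (-p)
    fun_prop
  have hzero : IntegrableAtFilter (fun t : ℝ => t ^ (-(sig / lam) - 1) • F (t ^ (-(sig / lam))))
      (𝓝[>] 0) := by
    refine (isBigO_exp_smul_mlRelax_extBetaIntegrand hlam hsig htau p q e1 e2 ha).integrableAtFilter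
      ⟨Ioi 0, self_mem_nhdsWithin, ?_⟩ ⟨Ioo 0 1, Ioo_mem_nhdsGT one_pos, h⟩
    refine ContinuousOn.aestronglyMeasurable (fun t (ht : 0 < t) => ?_) measurableSet_Ioi
    have hrpow (r : ℝ) := Real.continuousAt_rpow_const t r (Or.inl ht.ne')
    exact ((hrpow _).smul (hF.continuousAt.comp (hrpow _))).continuousWithinAt
  have htop := integrableAtFilter_atTop_of_comp_rpow_neg (div_pos hsig hlam) hzero
  exact (integrableOn_Ici_iff_integrableAtFilter_atTop.2
    ⟨htop, hF.locallyIntegrable.locallyIntegrableOn _⟩).mono_set Ioi_subset_Ici_self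

theorem integrableOn_extBetaIntegrand_of_integrableOn (hlam : 0 < lam) (hsig : 0 < sig)
    (htau : 0 < tau) {a b : ℂ} (h : IntegrableOn (extBetaIntegrand lam sig tau p q a b) (Ioo 0 1))
    (he1 : 0 < e1.re) (he2 : 0 < e2.re) :
    IntegrableOn (extBetaIntegrand lam sig tau p q e1 e2) (Ioo 0 1) :=
  integrableOn_extBetaIntegrand_of_laplaceIntegrable hlam hsig htau
    (fun _ => laplaceIntegrable_mlRelax_of_integrableOn_extBetaIntegrand hlam hsig htau h)
    (fun _ => laplaceIntegrable_mlRelax_of_integrableOn_extBetaIntegrand hlam htau hsig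
      (integrableOn_extBetaIntegrand_swap h)) he1 he2

end Converse

section Summation

variable {lam sig tau : ℝ} {p q e1 e2 : ℂ}

theorem hasSum_pow_mul_one_sub {t : ℝ} (ht0 : 0 ≤ t) (ht1 : t < 1) :
    HasSum (fun n : ℕ => t ^ n * (1 - t)) 1 := by
  simpa [inv_mul_cancel₀ (sub_pos.2 ht1).ne'] using
    (hasSum_geometric_of_lt_one ht0 ht1).mul_right (1 - t)

theorem extBetaIntegrand_add_natCast_add_one (lam sig tau : ℝ) (p q e1 e2 : ℂ) (n : ℕ) {t : ℝ}
    (ht0 : 0 < t) (ht1 : t < 1) :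
    extBetaIntegrand lam sig tau p q (e1 + n) (e2 + 1) t =
      extBetaIntegrand lam sig tau p q e1 e2 t * ((t ^ n * (1 - t) : ℝ) : ℂ) := by
  have h0 : (t : ℂ) ≠ 0 := ofReal_ne_zero.2 ht0.ne'
  have h1 : 1 - (t : ℂ) ≠ 0 := by exact_mod_cast (sub_pos.2 ht1).ne'
  rw [extBetaIntegrand, extBetaIntegrand, add_sub_right_comm, add_sub_right_comm,
    cpow_add _ _ h0, cpow_add _ _ h1, cpow_natCast, cpow_one]
  push_cast
  ring

theorem hasSum_integral_mul_pow_mul_one_sub {f : ℝ → ℂ} (hf : IntegrableOn f (Ioo 0 1)) :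
    HasSum (fun n : ℕ => ∫ t in Ioo (0 : ℝ) 1, f t * ((t ^ n * (1 - t) : ℝ) : ℂ))
      (∫ t in Ioo (0 : ℝ) 1, f t) := by
  have hgeom : ∀ᵐ t : ℝ ∂volume.restrict (Ioo 0 1), HasSum (fun n : ℕ => t ^ n * (1 - t)) 1 := by
    filter_upwards [ae_restrict_mem measurableSet_Ioo] with t ht
    exact hasSum_pow_mul_one_sub ht.1.le ht.2
  refine hasSum_integral_of_dominated_convergence (fun n t => ‖f t‖ * (t ^ n * (1 - t)))
    (fun n => hf.aestronglyMeasurable.mul (Continuous.aestronglyMeasurable (by fun_prop)))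
    (fun n => ?_) ?_ ?_ ?_
  · filter_upwards [ae_restrict_mem measurableSet_Ioo] with t ht
    have : 0 ≤ t ^ n * (1 - t) := mul_nonneg (pow_nonneg ht.1.le n) (sub_nonneg.2 ht.2.le)
    rw [norm_mul, Complex.norm_of_nonneg this]
  · filter_upwards [hgeom] with t ht using ht.summable.mul_left _
  · refine hf.norm.congr ?_
    filter_upwards [hgeom] with t ht
    rw [tsum_mul_left, ht.tsum_eq, mul_one]
  · filter_upwards [hgeom] with t ht
    simpa using (hasSum_ofReal.2 ht).mul_left (f t)

end Summation

theorem extBeta_infinite_summation_general (lam sig tau : ℝ) (hlam : 0 < lam) (hsig : 0 < sig)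
    (htau : 0 < tau) (p q e1 e2 : ℂ) (he1 : 0 < e1.re) (he2 : 0 < e2.re) :
    HasSum (fun n : ℕ => extBeta lam sig tau p q (e1 + n) (e2 + 1))
      (extBeta lam sig tau p q e1 e2) := by
  by_cases h : ∃ a b, IntegrableOn (extBetaIntegrand lam sig tau p q a b) (Ioo 0 1)
  · obtain ⟨a, b, h⟩ := h
    have hint := integrableOn_extBetaIntegrand_of_integrableOn hlam hsig htau h he1 he2
    have hterm (n : ℕ) : extBeta lam sig tau p q (e1 + n) (e2 + 1) = ∫ t in Ioo (0 : ℝ) 1,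
        extBetaIntegrand lam sig tau p q e1 e2 t * ((t ^ n * (1 - t) : ℝ) : ℂ) :=
      setIntegral_congr_fun measurableSet_Ioo fun t ht =>
        extBetaIntegrand_add_natCast_add_one lam sig tau p q e1 e2 n ht.1 ht.2
    simp_rw [hterm]
    exact hasSum_integral_mul_pow_mul_one_sub hint
  · push Not at h
    have hzero (a b : ℂ) : extBeta lam sig tau p q a b = 0 := integral_undef (h a b)
    simpa only [hzero] using hasSum_zero

theorem extBeta_infinite_summation (lam sig tau : ℝ) (hlam : 0 < lam) (hsig : 0 < sig)
    (htau : 0 < tau) (p q e1 e2 : ℂ) (hp : 0 < p.re) (hq : 0 < q.re)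
    (he1 : 0 < e1.re) (he2 : 0 < e2.re) :
    HasSum (fun n : ℕ => extBeta lam sig tau p q (e1 + n) (e2 + 1))
      (extBeta lam sig tau p q e1 e2) :=
  extBeta_infinite_summation_general lam sig tau hlam hsig htau p q e1 e2 he1 he2
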